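/- If a transcendental entire function f has a Baker wandering domain, then ∞ is the Baker omitted value of f; i.e., the image of every unbounded curve under f is unbounded. -/

import Mathlib

open Complex Metric Bornology Topology Filter Set OnePoint

/-- `z₀` is a pole of `f` : `f → ∞` near `z₀`. -/
def IsPole (f : ℂ → ℂ) (z₀ : ℂ) : Prop :=
  Tendsto f (𝓝[≠] z₀) (Bornology.cobounded ℂ)

/-- `f` is a transcendental meromorphic function on `ℂ`
(meromorphic everywhere and not a rational function). -/
def TranscMero (f : ℂ → ℂ) : Prop :=
  MeromorphicOn f Set.univ ∧
    ¬ ∃ p q : Polynomial ℂ, q ≠ 0 ∧ ∀ z, f z * q.eval z = p.eval z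

/-- `f` is a transcendental entire function. -/
def TranscEntire (f : ℂ → ℂ) : Prop :=
  Differentiable ℂ f ∧ ¬ ∃ p : Polynomial ℂ, f = fun z => p.eval z

/-- Preimage under the meromorphic function `f` of the ball `D_r(a)`
(poles, where the `ℂ`-valued representative carries a junk value, are excluded). -/
def preimBall (f : ℂ → ℂ) (a : ℂ) (r : ℝ) : Set ℂ :=
  {z | ¬ IsPole f z ∧ f z ∈ Metric.ball a r}

/-- Every connected component of `S` is a bounded subset of `ℂ`. -/
def BoundedComponents (S : Set ℂ) : Prop :=
  ∀ z ∈ S, Bornology.IsBounded (connectedComponentIn S z)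

/-- `S ⊆ ℂ` is infinitely connected: its complement has infinitely many
connected components. -/
def InfConnected (S : Set ℂ) : Prop :=
  {C : Set ℂ | ∃ z ∈ Sᶜ, C = connectedComponentIn Sᶜ z}.Infinite

/-- `a ∈ ℂ` is a Baker omitted value of the meromorphic function `f`:
`a` is omitted and, for all sufficiently small `r > 0`, every component of the
boundary of `f⁻¹(D_r(a))` is bounded. -/
def BakerOmittedValue (f : ℂ → ℂ) (a : ℂ) : Prop :=
  (∀ z, ¬ IsPole f z → f z ≠ a) ∧
    ∃ r₀ > 0, ∀ r, 0 < r → r < r₀ →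
      BoundedComponents (frontier (preimBall f a r))

/-- `∞` is a Baker omitted value of the entire function `f`: for every large
enough `R`, every component of the boundary of `f⁻¹({|w| > R})` is bounded. -/
def BakerOmittedValueInf (f : ℂ → ℂ) : Prop :=
  ∃ R₀ > 0, ∀ R, R₀ < R → BoundedComponents (frontier {z | R < ‖f z‖})

/-- Baker omitted value at a point of the Riemann sphere `ℂ ∪ {∞}`. -/
def BakerOmittedValueSph (f : ℂ → ℂ) (v : OnePoint ℂ) : Prop :=
  (v = ∞ ∧ (∀ z, ¬ IsPole f z) ∧ BakerOmittedValueInf f) ∨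
    (∃ a : ℂ, v = ↑a ∧ BakerOmittedValue f a)

/-- `b ∈ ℂ` is a (finite) asymptotic value of `f`. -/
def AsympValue (f : ℂ → ℂ) (b : ℂ) : Prop :=
  ∃ γ : ℝ → ℂ, ContinuousOn γ (Set.Ici 0) ∧
    Tendsto γ atTop (Bornology.cobounded ℂ) ∧
    Tendsto (fun t => f (γ t)) atTop (𝓝 b)

/-- `∞` is an asymptotic value of `f`. -/
def AsympValueInf (f : ℂ → ℂ) : Prop :=
  ∃ γ : ℝ → ℂ, ContinuousOn γ (Set.Ici 0) ∧
    Tendsto γ atTop (Bornology.cobounded ℂ) ∧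
    Tendsto (fun t => f (γ t)) atTop (Bornology.cobounded ℂ)

/-- uniform divergence to `∞` of a sequence of functions on `K`. -/
def UnifDiverges (F : ℕ → ℂ → ℂ) (K : Set ℂ) : Prop :=
  ∀ M : ℝ, ∀ᶠ n in atTop, ∀ z ∈ K, M < ‖F n z‖

/-- The iterates of `f` form a normal family on `U`: every subsequence has a
further subsequence converging locally uniformly on `U`, either to a finite
limit function or to `∞`. -/
def NormalOn (f : ℂ → ℂ) (U : Set ℂ) : Prop :=
  ∀ s : ℕ → ℕ, StrictMono s → ∃ t : ℕ → ℕ, StrictMono t ∧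
    ((∃ g : ℂ → ℂ, TendstoLocallyUniformlyOn (fun n => f^[s (t n)]) g atTop U) ∨
      (∀ K ⊆ U, IsCompact K → UnifDiverges (fun n => f^[s (t n)]) K))

/-- The Fatou set of `f`. -/
def FatouSet (f : ℂ → ℂ) : Set ℂ :=
  {z | ∃ U : Set ℂ, IsOpen U ∧ z ∈ U ∧ NormalOn f U}

/-- `U` is a Fatou component of `f`. -/
def IsFatouComponent (f : ℂ → ℂ) (U : Set ℂ) : Prop :=
  ∃ z ∈ FatouSet f, U = connectedComponentIn (FatouSet f) z

/-- `U` surrounds `0`: `0` lies in a bounded complementary component of `U`. -/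
def SurroundsZero (U : Set ℂ) : Prop :=
  0 ∉ U ∧ Bornology.IsBounded (connectedComponentIn Uᶜ 0)

/-- `U` is multiply connected: its complement has a bounded component. -/
def MultiplyConnected (U : Set ℂ) : Prop :=
  ∃ w ∉ U, Bornology.IsBounded (connectedComponentIn Uᶜ w)

/-- `U` is a Baker wandering domain of `f`. -/
def IsBakerWanderingDomain (f : ℂ → ℂ) (U : Set ℂ) : Prop :=
  ∃ z₀ ∈ FatouSet f, U = connectedComponentIn (FatouSet f) z₀ ∧
    (∀ m n : ℕ, m ≠ n →
      connectedComponentIn (FatouSet f) (f^[m] z₀) ≠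
        connectedComponentIn (FatouSet f) (f^[n] z₀)) ∧
    (∃ N : ℕ, ∀ n ≥ N,
      Bornology.IsBounded (connectedComponentIn (FatouSet f) (f^[n] z₀)) ∧
      MultiplyConnected (connectedComponentIn (FatouSet f) (f^[n] z₀)) ∧
      SurroundsZero (connectedComponentIn (FatouSet f) (f^[n] z₀))) ∧
    (∀ z ∈ U, Tendsto (fun n => f^[n] z) atTop (Bornology.cobounded ℂ))

/-- `U` is a completely invariant set for `f`. -/
def CompletelyInvariant (f : ℂ → ℂ) (U : Set ℂ) : Prop :=
  f '' U ⊆ U ∧ f ⁻¹' U ⊆ U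

theorem aux_frontier {s t : Set ℂ} (hs : IsPreconnected s) (h1 : (s ∩ t).Nonempty)
    (h2 : Disjoint s (frontier t)) : s ⊆ t := by
  have key : s ⊆ interior t := by
    apply hs.subset_of_closure_inter_subset isOpen_interior
    · obtain ⟨x, hx, hxt⟩ := h1
      refine ⟨x, hx, ?_⟩
      by_contra h
      exact Set.disjoint_left.1 h2 hx ⟨subset_closure hxt, h⟩
    · rintro x ⟨hx, hxs⟩
      by_contra h
      exact Set.disjoint_left.1 h2 hxs ⟨closure_mono interior_subset hx, h⟩
  exact key.trans interior_subset

theorem aux_local {f : ℂ → ℂ} {V : Set ℂ} (hV : NormalOn f V) {z : ℂ} (hz : z ∈ V)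
    (hzt : Tendsto (fun n => f^[n] z) atTop (Bornology.cobounded ℂ))
    {K : Set ℂ} (hKV : K ⊆ V) (hK : IsCompact K) : UnifDiverges (fun n => f^[n]) K := by
  intro M
  by_contra hcon
  rw [Filter.not_eventually] at hcon
  obtain ⟨s, hs, hsP⟩ := Filter.extraction_of_frequently_atTop hcon
  obtain ⟨t, ht, h | h⟩ := hV s hs
  · obtain ⟨g, hg⟩ := h
    have h1 : Tendsto (fun n => f^[s (t n)] z) atTop (𝓝 (g z)) := hg.tendsto_at hz
    have h2 : Tendsto (fun n => f^[s (t n)] z) atTop (Bornology.cobounded ℂ) :=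
      hzt.comp (hs.comp ht).tendsto_atTop
    exact (h1.not_tendsto (Metric.disjoint_nhds_cobounded _)) h2
  · obtain ⟨n, hn⟩ := (h K hKV hK M).exists
    exact hsP (t n) hn

theorem aux_diverges {f : ℂ → ℂ} {w : ℂ} (hw : w ∈ FatouSet f)
    (hwt : Tendsto (fun n => f^[n] w) atTop (Bornology.cobounded ℂ))
    {K : Set ℂ} (hKV : K ⊆ connectedComponentIn (FatouSet f) w) (hK : IsCompact K) :
    UnifDiverges (fun n => f^[n]) K := by
  set A : Set ℂ := {z | Tendsto (fun n => f^[n] z) atTop (Bornology.cobounded ℂ)} with hA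
  have hall : ∀ V : Set ℂ, NormalOn f V → (V ∩ A).Nonempty → V ⊆ A := by
    rintro V hV ⟨x, hxV, hxA⟩ y hy
    have := aux_local hV hxV hxA (K := {y}) (by simpa using hy) isCompact_singleton
    show Tendsto (fun n => f^[n] y) atTop (Bornology.cobounded ℂ)
    rw [← tendsto_norm_atTop_iff_cobounded, Filter.tendsto_atTop]
    intro M
    filter_upwards [this M] with n hn
    exact (hn y rfl).le
  have hsub : connectedComponentIn (FatouSet f) w ⊆ interior A := by
    apply isPreconnected_connectedComponentIn.subset_of_closure_inter_subset isOpen_interior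
    · obtain ⟨V, hVo, hwV, hVn⟩ := hw
      exact ⟨w, mem_connectedComponentIn ⟨V, hVo, hwV, hVn⟩,
        mem_interior.2 ⟨V, hall V hVn ⟨w, hwV, hwt⟩, hVo, hwV⟩⟩
    · rintro x ⟨hx, hxW⟩
      obtain ⟨V, hVo, hxV, hVn⟩ := connectedComponentIn_subset _ _ hxW
      obtain ⟨y, hyV, hyA⟩ := mem_closure_iff.1 hx V hVo hxV
      exact mem_interior.2 ⟨V, hall V hVn ⟨y, hyV, interior_subset hyA⟩, hVo, hxV⟩
  intro M
  refine hK.induction_on (p := fun S => ∀ᶠ n in atTop, ∀ z ∈ S, M < ‖f^[n] z‖) ?_ ?_ ?_ ?_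
  · simp
  · intro s t hst h
    filter_upwards [h] with n hn z hz using hn z (hst hz)
  · intro s t h1 h2
    filter_upwards [h1, h2] with n hn1 hn2 z hz
    exact hz.elim (hn1 z) (hn2 z)
  · intro x hx
    obtain ⟨V, hVo, hxV, hVn⟩ := connectedComponentIn_subset _ _ (hKV hx)
    obtain ⟨C, hC, hCc, hCV⟩ := exists_mem_nhds_isCompact_mapsTo (f := (id : ℂ → ℂ))
      continuous_id (hVo.mem_nhds hxV)
    exact ⟨C, mem_nhdsWithin_of_mem_nhds hC,
      aux_local hVn hxV (interior_subset (hsub (hKV hx))) (fun y hy => hCV hy) hCc M⟩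

theorem aux_hole {W : Set ℂ} (hW : IsOpen W) (h0 : SurroundsZero W) :
    ∃ H : Set ℂ, IsOpen H ∧ Bornology.IsBounded H ∧ (0 : ℂ) ∈ H ∧ frontier H ⊆ W := by
  obtain ⟨h0W, hb⟩ := h0
  obtain ⟨r, hr0, hr⟩ : ∃ r > 0, connectedComponentIn Wᶜ 0 ⊆ ball (0 : ℂ) r := by
    obtain ⟨r, hr⟩ := hb.subset_ball (0 : ℂ)
    exact ⟨max r 1, by positivity, hr.trans (ball_subset_ball (le_max_left _ _))⟩
  set X : Set ℂ := Wᶜ ∩ closedBall 0 r with hX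
  have hXc : IsCompact X := (isCompact_closedBall 0 r).inter_left hW.isClosed_compl
  have h0X : (0 : ℂ) ∈ X := ⟨h0W, by simp [hr0.le]⟩
  haveI : CompactSpace X := isCompact_iff_compactSpace.1 hXc
  let x0 : X := ⟨0, h0X⟩
  let N := { s : Set X // IsClopen s ∧ x0 ∈ s }
  haveI : Nonempty N := ⟨⟨univ, isClopen_univ, mem_univ _⟩⟩
  have hdir : Directed (· ⊇ ·) fun s : N => s.val := by
    rintro ⟨s, hs, hxs⟩ ⟨t, ht, hxt⟩
    exact ⟨⟨s ∩ t, hs.inter ht, ⟨hxs, hxt⟩⟩, inter_subset_left, inter_subset_right⟩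
  have hbo : IsOpen (((↑) : X → ℂ) ⁻¹' ball 0 r) := isOpen_ball.preimage continuous_subtype_val
  obtain ⟨⟨Z, hZ, hxZ⟩, hZb⟩ : ∃ s : N, s.val ⊆ ((↑) : X → ℂ) ⁻¹' ball 0 r := by
    apply exists_subset_nhds_of_compactSpace hdir (fun s => s.2.1.1)
    intro y hy
    rw [← connectedComponent_eq_iInter_isClopen] at hy
    apply hbo.mem_nhds
    apply hr
    have hpre : IsPreconnected (((↑) : X → ℂ) '' connectedComponent x0) :=
      isPreconnected_connectedComponent.image _ continuous_subtype_val.continuousOn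
    refine hpre.subset_connectedComponentIn ⟨x0, mem_connectedComponent, rfl⟩ ?_ ⟨y, hy, rfl⟩
    rintro _ ⟨a, -, rfl⟩
    exact a.2.1
  simp only at hZb
  set Y : Set ℂ := ((↑) : X → ℂ) '' Z with hY
  have hYc : IsCompact Y := hZ.1.isCompact.image continuous_subtype_val
  have hTc : IsClosed (((↑) : X → ℂ) '' Zᶜ ∪ (Wᶜ ∩ (ball 0 r)ᶜ)) :=
    (hZ.compl.1.isCompact.image continuous_subtype_val).isClosed.union
      (hW.isClosed_compl.inter isOpen_ball.isClosed_compl)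
  have hdis : Disjoint Y (((↑) : X → ℂ) '' Zᶜ ∪ (Wᶜ ∩ (ball 0 r)ᶜ)) := by
    rw [Set.disjoint_left]
    rintro _ ⟨a, ha, rfl⟩ (⟨b, hb, hab⟩ | h)
    · exact hb (Subtype.ext hab ▸ ha)
    · exact h.2 (hZb ha)
  obtain ⟨δ, hδ, hd⟩ := hdis.exists_cthickenings hYc hTc
  refine ⟨thickening δ Y, isOpen_thickening, hYc.isBounded.thickening,
    self_subset_thickening hδ _ ⟨x0, hxZ, rfl⟩, ?_⟩
  intro z hz
  have hz1 : z ∈ cthickening δ Y := closure_thickening_subset_cthickening _ _ hz.1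
  have hz2 : z ∉ thickening δ Y := by
    have := hz.2
    rwa [isOpen_thickening.interior_eq] at this
  by_contra hzW
  have hzT : z ∉ ((↑) : X → ℂ) '' Zᶜ ∪ (Wᶜ ∩ (ball 0 r)ᶜ) := fun h =>
    Set.disjoint_left.1 hd hz1 (self_subset_cthickening _ h)
  by_cases hzb : z ∈ ball (0 : ℂ) r
  · by_cases hzZ : (⟨z, hzW, ball_subset_closedBall hzb⟩ : X) ∈ Z
    · exact hz2 (self_subset_thickening hδ _ ⟨_, hzZ, rfl⟩)
    · exact hzT (Or.inl ⟨_, hzZ, rfl⟩)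
  · exact hzT (Or.inr ⟨hzW, hzb⟩)

theorem aux_main (f : ℂ → ℂ) (hf : TranscEntire f)
    (hU : ∃ U : Set ℂ, IsBakerWanderingDomain f U) (Γ : Set ℂ) (hΓ : IsPreconnected Γ)
    (hfΓ : Bornology.IsBounded (f '' Γ)) : Bornology.IsBounded Γ := by
  by_contra hΓb
  have hopen : IsOpenMap f := by
    have han : AnalyticOnNhd ℂ f univ := fun z _ => hf.1.analyticAt z
    rcases han.is_constant_or_isOpen isPreconnected_univ with ⟨w, hw⟩ | h
    · exact absurd ⟨Polynomial.C w, funext fun z => by simp [hw z]⟩ hf.2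
    · exact fun s hs => h s (subset_univ _) hs
  have hopenn : ∀ n, IsOpenMap f^[n] := by
    intro n
    induction n with
    | zero => exact IsOpenMap.id
    | succ k ih => exact ih.comp hopen
  have hcontn : ∀ n, Continuous f^[n] := fun n => hf.1.continuous.iterate n
  obtain ⟨U, z₀, hz₀, rfl, -, ⟨N, hN⟩, hesc⟩ := hU
  obtain ⟨-, -, hsur⟩ := hN N le_rfl
  set w := f^[N] z₀ with hw
  have hwF : w ∈ FatouSet f := by
    by_contra h
    rw [connectedComponentIn_eq_empty h] at hsur
    have := hsur.2
    rw [compl_empty, connectedComponentIn_univ,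
      PreconnectedSpace.connectedComponent_eq_univ] at this
    exact NormedSpace.unbounded_univ ℂ ℂ this
  have hwt : Tendsto (fun n => f^[n] w) atTop (Bornology.cobounded ℂ) := by
    have h := (tendsto_add_atTop_iff_nat N).2 (hesc z₀ (mem_connectedComponentIn hz₀))
    simpa only [hw, Function.iterate_add_apply] using h
  have hFo : IsOpen (FatouSet f) := by
    rw [isOpen_iff_mem_nhds]
    rintro z ⟨V, hVo, hzV, hVn⟩
    exact mem_of_superset (hVo.mem_nhds hzV) fun y hy => ⟨V, hVo, hy, hVn⟩
  obtain ⟨H, hHo, hHb, h0H, hHfr⟩ := aux_hole hFo.connectedComponentIn hsur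
  have hclc : IsCompact (closure H) := hHb.isCompact_closure
  have hfrc : IsCompact (frontier H) := hclc.of_isClosed_subset isClosed_frontier
    frontier_subset_closure
  have hdiv := aux_diverges hwF hwt hHfr hfrc
  have hnot : ¬ UnifDiverges (fun n => f^[n]) H := by
    intro hH
    have hHF : H ⊆ FatouSet f := fun z hz => ⟨H, hHo, hz, fun s hs =>
      ⟨id, strictMono_id, Or.inr fun K hK _ M => by
        filter_upwards [hs.tendsto_atTop.eventually (hH M)] with n hn z hz
        exact hn z (hK hz)⟩⟩
    set C := connectedComponentIn (closure H) 0 with hC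
    have h0C : (0 : ℂ) ∈ C := mem_connectedComponentIn (subset_closure h0H)
    have hCF : C ⊆ FatouSet f := by
      intro z hz
      have hz' := connectedComponentIn_subset _ _ hz
      by_cases hzH : z ∈ H
      · exact hHF hzH
      · exact connectedComponentIn_subset _ _ (hHfr ⟨hz', by rwa [hHo.interior_eq]⟩)
    -- the component reaches the frontier
    have hmeet : (C ∩ frontier H).Nonempty := by
      by_contra hemp
      rw [Set.not_nonempty_iff_eq_empty] at hemp
      have hCH : C ⊆ H := by
        intro z hz
        by_contra hzH
        have : z ∈ C ∩ frontier H :=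
          ⟨hz, connectedComponentIn_subset _ _ hz, by rwa [hHo.interior_eq]⟩
        rw [hemp] at this
        exact this
      have hCeq : C = connectedComponentIn H 0 := by
        apply Subset.antisymm
        · exact isPreconnected_connectedComponentIn.subset_connectedComponentIn h0C hCH
        · exact connectedComponentIn_mono _ subset_closure
      have hCo : IsOpen C := hCeq ▸ hHo.connectedComponentIn
      have hCcl : IsClosed C := isClosed_of_closure_subset <|
        isPreconnected_connectedComponentIn.closure.subset_connectedComponentIn
          (subset_closure h0C)
          (closure_minimal (connectedComponentIn_subset _ _) isClosed_closure)
      have : C = univ := IsClopen.eq_univ ⟨hCcl, hCo⟩ ⟨0, h0C⟩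
      exact NormedSpace.unbounded_univ ℂ ℂ (this ▸ hHb.subset hCH)
    obtain ⟨y, hyC, hyfr⟩ := hmeet
    have hyW := hHfr hyfr
    have : C ⊆ connectedComponentIn (FatouSet f) w := by
      rw [connectedComponentIn_eq hyW]
      exact isPreconnected_connectedComponentIn.subset_connectedComponentIn hyC hCF
    exact hsur.1 (this h0C)
  unfold UnifDiverges at hnot
  push Not at hnot
  obtain ⟨M, hM⟩ := hnot
  obtain ⟨p, hp⟩ : Γ.Nonempty := by
    rw [Set.nonempty_iff_ne_empty]
    rintro rfl
    exact hΓb Bornology.isBounded_empty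
  obtain ⟨R, hR⟩ := hfΓ.exists_norm_le
  obtain ⟨n, ⟨z, hzH, hzM⟩, h1, h2⟩ := (hM.and_eventually ((hdiv (max M ‖p‖)).and
    ((tendsto_add_atTop_nat 1).eventually (hdiv R)))).exists
  have hLc : IsCompact (f^[n] '' closure H) := hclc.image (hcontn n)
  have hLfr : frontier (f^[n] '' closure H) ⊆ f^[n] '' frontier H := by
    intro x hx
    obtain ⟨y, hy, rfl⟩ := hLc.isClosed.frontier_subset hx
    refine ⟨y, ⟨hy, fun hyi => hx.2 ?_⟩, rfl⟩
    exact mem_interior.2 ⟨f^[n] '' interior H,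
      image_mono (interior_subset.trans subset_closure), hopenn n _ isOpen_interior, ⟨y, hyi, rfl⟩⟩
  have hball : closedBall (0 : ℂ) (max M ‖p‖) ⊆ f^[n] '' closure H := by
    apply aux_frontier (convex_closedBall _ _).isPreconnected
    · exact ⟨f^[n] z, by simpa using Or.inl hzM, z, subset_closure hzH, rfl⟩
    · rw [Set.disjoint_left]
      intro x hx hxf
      obtain ⟨y, hy, rfl⟩ := hLfr hxf
      exact absurd (h1 y hy) (not_lt.2 (by simpa using hx))
  have hpL : p ∈ f^[n] '' closure H := hball (by simp)
  apply hΓb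
  refine hLc.isBounded.subset (aux_frontier hΓ ⟨p, hp, hpL⟩ ?_)
  rw [Set.disjoint_left]
  intro x hx hxf
  obtain ⟨y, hy, rfl⟩ := hLfr hxf
  have h3 := h2 y hy
  have h4 := hR (f (f^[n] y)) ⟨_, hx, rfl⟩
  rw [← Function.iterate_succ_apply' f n y] at h4
  exact absurd h3 (not_lt.2 h4)

/-- If a transcendental entire function has a Baker wandering
domain, then `∞` is its Baker omitted value; i.e. the image of every unbounded
curve under `f` is unbounded. -/
theorem stmt13 (f : ℂ → ℂ) (hf : TranscEntire f)
    (hU : ∃ U : Set ℂ, IsBakerWanderingDomain f U) :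
    BakerOmittedValueInf f ∧
      (∀ γ : ℝ → ℂ, ContinuousOn γ (Set.Ici 0) → Tendsto γ atTop (Bornology.cobounded ℂ) → ¬ Bornology.IsBounded (f '' (γ '' Set.Ici 0))) := by
  refine ⟨⟨1, one_pos, fun R hR z hz => ?_⟩, fun γ hγ hγt hb => ?_⟩
  · apply aux_main f hf hU _ isPreconnected_connectedComponentIn
    refine (Metric.isBounded_closedBall (x := (0 : ℂ)) (r := R)).subset ?_
    rintro _ ⟨y, hy, rfl⟩
    have hy' := connectedComponentIn_subset _ _ hy
    have hop : IsOpen {z | R < ‖f z‖} := isOpen_lt continuous_const hf.1.continuous.norm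
    have := hy'.2
    rw [hop.interior_eq] at this
    simpa using this
  · have hbd := aux_main f hf hU _ (isPreconnected_Ici.image γ hγ) hb
    obtain ⟨R, hR⟩ := hbd.exists_norm_le
    have h1 := (tendsto_norm_atTop_iff_cobounded.2 hγt).eventually (eventually_gt_atTop R)
    obtain ⟨t, ht, ht0⟩ := (h1.and (eventually_ge_atTop 0)).exists
    exact absurd ht (not_lt.2 (hR _ ⟨t, ht0, rfl⟩))
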